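/- Let h^μ : ℝⁿ → Mat(N, ℂ) (μ = 1,…,n) be continuously differentiable and satisfy the Clifford relations at every point, and let C_μ : ℝⁿ → Mat(N, ℂ) satisfy the primitive field equation ∂_μ h_ρ − [C_μ, h_ρ] = 0 for all μ, ρ. Then for every μ and every x ∈ ℝⁿ: n·C_μ(x) − Σ_{ρ=1}^n η_{ρρ} h^ρ(x) C_μ(x) h^ρ(x) = Σ_{ρ=1}^n η_{ρρ} (∂_μ h^ρ)(x) h^ρ(x). -/

import Mathlib

open Matrix

attribute [local instance] Matrix.normedAddCommGroup Matrix.normedSpace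

/-- The diagonal metric entries η^{μμ} of signature (p,q). -/
def etaC (p q : ℕ) (μ : Fin (p + q)) : ℂ := if (μ : ℕ) < p then 1 else -1

/-- The Clifford relations h^μ h^ν + h^ν h^μ = 2 η^{μν} I for signature (p,q). -/
def CliffRel (p q N : ℕ) (h : Fin (p + q) → Matrix (Fin N) (Fin N) ℂ) : Prop :=
  ∀ μ ν : Fin (p + q), h μ * h ν + h ν * h μ =
    (2 * if μ = ν then etaC p q μ else 0) • (1 : Matrix (Fin N) (Fin N) ℂ)

/-- The partial derivative ∂_μ of a matrix-valued function on ℝⁿ. -/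
noncomputable def pder {n N : ℕ} (μ : Fin n)
    (f : (Fin n → ℝ) → Matrix (Fin N) (Fin N) ℂ) (x : Fin n → ℝ) :
    Matrix (Fin N) (Fin N) ℂ :=
  fderiv ℝ f x (Pi.single μ 1)

/-
Each lowered generator `h_ρ = η_{ρρ} h^ρ` is a left inverse of `h^ρ`, so
`[C_μ, h_ρ] h^ρ = C_μ - h_ρ C_μ h^ρ` (no sum). Replacing the commutator by `∂_μ h_ρ` and summing
over `ρ` gives the contraction equation.
-/

theorem card_nsmul_sub_sum_mul_mul_eq_sum_lie_mul {ι A : Type*} [Fintype ι] [Ring A]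
    {e f : ι → A} (hfe : ∀ i, f i * e i = 1) (a : A) :
    Fintype.card ι • a - ∑ i, f i * a * e i = ∑ i, ⁅a, f i⁆ * e i := by
  have lie_mul_eq (i : ι) : ⁅a, f i⁆ * e i = a - f i * a * e i := by
    rw [Ring.lie_def, sub_mul, mul_assoc a, hfe, mul_one]
  simp only [lie_mul_eq, Finset.sum_sub_distrib, Finset.sum_const, Finset.card_univ]

theorem etaC_mul_self (p q : ℕ) (μ : Fin (p + q)) : etaC p q μ * etaC p q μ = 1 := by
  unfold etaC
  split_ifs <;> norm_num

theorem CliffRel.mul_self {p q N : ℕ} {h : Fin (p + q) → Matrix (Fin N) (Fin N) ℂ}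
    (hcl : CliffRel p q N h) (μ : Fin (p + q)) : h μ * h μ = etaC p q μ • 1 := by
  have two_smul_sq : (2 : ℂ) • (h μ * h μ) = (2 : ℂ) • etaC p q μ • 1 := by
    simpa only [if_true, two_smul ℂ (h μ * h μ), mul_smul] using hcl μ μ
  exact smul_right_injective _ two_ne_zero two_smul_sq

theorem CliffRel.etaC_smul_mul_self {p q N : ℕ} {h : Fin (p + q) → Matrix (Fin N) (Fin N) ℂ}
    (hcl : CliffRel p q N h) (μ : Fin (p + q)) : etaC p q μ • (h μ * h μ) = 1 := by
  rw [hcl.mul_self, smul_smul, etaC_mul_self, one_smul]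

theorem contraction_equation_for_C_general {ι m 𝕜 K E : Type*} [Fintype ι] [Fintype m]
    [DecidableEq m] [NontriviallyNormedField 𝕜] [NormedField K] [NormedAlgebra 𝕜 K]
    [NormedAddCommGroup E] [NormedSpace 𝕜 E]
    {η : ι → K} {h : ι → E → Matrix m m K} {x v : E} {c : Matrix m m K}
    (hdiff : ∀ ρ, DifferentiableAt 𝕜 (h ρ) x)
    (hsq : ∀ ρ, η ρ • (h ρ x * h ρ x) = 1)
    (hprim : ∀ ρ, fderiv 𝕜 (fun y => η ρ • h ρ y) x v - ⁅c, η ρ • h ρ x⁆ = 0) :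
    Fintype.card ι • c - ∑ ρ, η ρ • (h ρ x * c * h ρ x) =
      ∑ ρ, η ρ • (fderiv 𝕜 (h ρ) x v * h ρ x) := by
  have fderiv_lowered (ρ : ι) :
      fderiv 𝕜 (fun y => η ρ • h ρ y) x v = η ρ • fderiv 𝕜 (h ρ) x v :=
    congrArg (· v) (fderiv_fun_const_smul (hdiff ρ) (η ρ))
  have lie_lowered (ρ : ι) : ⁅c, η ρ • h ρ x⁆ = η ρ • fderiv 𝕜 (h ρ) x v := by
    rw [← sub_eq_zero.mp (hprim ρ), fderiv_lowered]
  have lowered_mul (ρ : ι) : (η ρ • h ρ x) * h ρ x = 1 := by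
    rw [smul_mul_assoc, hsq]
  simpa only [lie_lowered, smul_mul_assoc] using
    card_nsmul_sub_sum_mul_mul_eq_sum_lie_mul lowered_mul c

/-- if the primitive field equation ∂_μ h_ρ − [C_μ, h_ρ] = 0
holds (h_ρ = η_{ρρ} h^ρ), then
n·C_μ − Σ_ρ η_{ρρ} h^ρ C_μ h^ρ = Σ_ρ η_{ρρ} (∂_μ h^ρ) h^ρ. -/
theorem contraction_equation_for_C
    (p q N : ℕ) (hpq : 1 ≤ p + q) (hN : 1 ≤ N)
    (h C : Fin (p + q) → (Fin (p + q) → ℝ) → Matrix (Fin N) (Fin N) ℂ)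
    (hdiff : ∀ μ, ContDiff ℝ 1 (h μ))
    (hcl : ∀ x, CliffRel p q N (fun μ => h μ x))
    (hprim : ∀ μ ρ x,
      pder μ (fun y => etaC p q ρ • h ρ y) x -
        (C μ x * (etaC p q ρ • h ρ x) - (etaC p q ρ • h ρ x) * C μ x) = 0) :
    ∀ μ x,
      ((p + q : ℕ) : ℂ) • C μ x -
        ∑ ρ : Fin (p + q), etaC p q ρ • (h ρ x * C μ x * h ρ x) =
      ∑ ρ : Fin (p + q), etaC p q ρ • (pder μ (h ρ) x * h ρ x) := by
  intro μ x
  simpa only [pder, Fintype.card_fin, Nat.cast_smul_eq_nsmul] using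
    contraction_equation_for_C_general (fun ρ => (hdiff ρ).differentiable one_ne_zero x)
      (hcl x).etaC_smul_mul_self (hprim μ · x)
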